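/- Let X₁,…,Xₙ be mutually independent random variables with finitely many values, let T be a random variable that is a deterministic function of Xⁿ=(X₁,…,Xₙ), and let Y₁,…,Yₙ be finite-valued random variables such that for each i, Xᵢ is conditionally independent of Y^{i−1}=(Y₁,…,Y_{i−1}) given (X^{i−1},T). Then H(T) ≥ ∑_{i=1}^{n} I(Xᵢ ; (T, Y^{i−1})). -/

import Mathlib

open scoped BigOperators

set_option synthInstance.maxSize 512
set_option synthInstance.maxHeartbeats 1000000

noncomputable section

/-- Probability mass of the event `f = a` under the weight function `q` on a finite space. -/
def pmass {Ω α : Type*} [Fintype Ω] [DecidableEq α] (q : Ω → ℝ) (f : Ω → α) (a : α) : ℝ :=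
  ∑ ω, if f ω = a then q ω else 0

/-- Shannon entropy (in bits) of the value of `f` under `q`. -/
def ent {Ω α : Type*} [Fintype Ω] [Fintype α] [DecidableEq α] (q : Ω → ℝ) (f : Ω → α) : ℝ :=
  -∑ a, pmass q f a * Real.logb 2 (pmass q f a)

/-- Conditional Shannon entropy `H(f ∣ g)` (in bits). -/
def condEnt {Ω α β : Type*} [Fintype Ω] [Fintype α] [DecidableEq α] [Fintype β] [DecidableEq β]
    (q : Ω → ℝ) (f : Ω → α) (g : Ω → β) : ℝ :=
  ent q (fun ω => (f ω, g ω)) - ent q g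

/-- Mutual information `I(f ; g)` (in bits). -/
def mutInf {Ω α β : Type*} [Fintype Ω] [Fintype α] [DecidableEq α] [Fintype β] [DecidableEq β]
    (q : Ω → ℝ) (f : Ω → α) (g : Ω → β) : ℝ :=
  ent q f + ent q g - ent q (fun ω => (f ω, g ω))

/-- Conditional mutual information `I(f ; g ∣ h)` (in bits). -/
def condMutInf {Ω α β γ : Type*} [Fintype Ω] [Fintype α] [DecidableEq α] [Fintype β]
    [DecidableEq β] [Fintype γ] [DecidableEq γ]
    (q : Ω → ℝ) (f : Ω → α) (g : Ω → β) (h : Ω → γ) : ℝ :=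
  condEnt q f h - condEnt q f (fun ω => (g ω, h ω))

/-- `q` is a probability mass function on `Ω`. -/
def IsPMF {Ω : Type*} [Fintype Ω] (q : Ω → ℝ) : Prop :=
  (∀ ω, 0 ≤ q ω) ∧ ∑ ω, q ω = 1

lemma sum_pmass_mul {Ω α : Type*} [Fintype Ω] [Fintype α] [DecidableEq α] (q : Ω → ℝ)
    (f : Ω → α) (F : α → ℝ) : ∑ a, pmass q f a * F a = ∑ ω, q ω * F (f ω) := by
  simp only [pmass, Finset.sum_mul]
  rw [Finset.sum_comm]
  refine Finset.sum_congr rfl fun ω _ => ?_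
  simp [ite_mul]

lemma ent_eq {Ω α : Type*} [Fintype Ω] [Fintype α] [DecidableEq α] (q : Ω → ℝ) (f : Ω → α) :
    ent q f = -∑ ω, q ω * Real.logb 2 (pmass q f (f ω)) := by
  rw [ent, sum_pmass_mul q f (fun a => Real.logb 2 (pmass q f a))]

lemma ent_congr {Ω α β : Type*} [Fintype Ω] [Fintype α] [DecidableEq α] [Fintype β]
    [DecidableEq β] (q : Ω → ℝ) (f : Ω → α) (g : Ω → β)
    (h : ∀ ω ω', f ω = f ω' ↔ g ω = g ω') : ent q f = ent q g := by
  rw [ent_eq, ent_eq]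
  simp only [pmass, h]

lemma pmass_nonneg' {Ω α : Type*} [Fintype Ω] [DecidableEq α] {q : Ω → ℝ}
    (hq : ∀ ω, 0 ≤ q ω) (f : Ω → α) (a : α) : 0 ≤ pmass q f a := by
  refine Finset.sum_nonneg fun ω _ => ?_
  split_ifs
  · exact hq ω
  · exact le_rfl

lemma pmass_pos' {Ω α : Type*} [Fintype Ω] [DecidableEq α] {q : Ω → ℝ}
    (hq : ∀ ω, 0 ≤ q ω) (f : Ω → α) (ω : Ω) (h : 0 < q ω) : 0 < pmass q f (f ω) := by
  have : (if f ω = f ω then q ω else 0) ≤ pmass q f (f ω) := by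
    refine Finset.single_le_sum (f := fun ω' => if f ω' = f ω then q ω' else 0)
      (fun ω' _ => ?_) (Finset.mem_univ ω)
    split_ifs
    · exact hq ω'
    · exact le_rfl
  simp only [if_true] at this
  linarith

lemma sum_pmass_pair {Ω α β : Type*} [Fintype Ω] [Fintype α] [DecidableEq α]
    [DecidableEq β] (q : Ω → ℝ) (f : Ω → α) (g : Ω → β) (b : β) :
    ∑ a, pmass q (fun ω => (f ω, g ω)) (a, b) = pmass q g b := by
  simp only [pmass]
  rw [Finset.sum_comm]
  refine Finset.sum_congr rfl fun ω _ => ?_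
  by_cases h : g ω = b <;> simp [h]

lemma sum_pmass_one {Ω α : Type*} [Fintype Ω] [Fintype α] [DecidableEq α]
    (q : Ω → ℝ) (f : Ω → α) : ∑ a, pmass q f a = ∑ ω, q ω := by
  simpa using sum_pmass_mul q f (fun _ => 1)

lemma ent_submod {Ω α β γ : Type*} [Fintype Ω] [Fintype α] [DecidableEq α] [Fintype β]
    [DecidableEq β] [Fintype γ] [DecidableEq γ] (q : Ω → ℝ) (hq : IsPMF q)
    (A : Ω → α) (B : Ω → β) (C : Ω → γ) :
    ent q (fun ω => (A ω, (B ω, C ω))) + ent q C ≤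
      ent q (fun ω => (A ω, C ω)) + ent q (fun ω => (B ω, C ω)) := by
  obtain ⟨h0, h1⟩ := hq
  set PABC := pmass q (fun ω => (A ω, (B ω, C ω))) with hABC
  set PAC := pmass q (fun ω => (A ω, C ω)) with hAC
  set PBC := pmass q (fun ω => (B ω, C ω)) with hBC
  set PC := pmass q C with hC
  have hl2 : 0 < Real.log 2 := Real.log_pos (by norm_num)
  have nAC := pmass_nonneg' h0 (fun ω => (A ω, C ω))
  have nBC := pmass_nonneg' h0 (fun ω => (B ω, C ω))
  have nABC := pmass_nonneg' h0 (fun ω => (A ω, (B ω, C ω)))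
  have nC := pmass_nonneg' h0 C
  let R : α × (β × γ) → ℝ := fun x =>
    PAC (x.1, x.2.2) * PBC x.2 / (PABC x * PC x.2.2)
  have hR : ∑ ω, q ω * R (A ω, (B ω, C ω)) ≤ 1 := by
    rw [← sum_pmass_mul q (fun ω => (A ω, (B ω, C ω))) R]
    calc ∑ x, PABC x * R x
        ≤ ∑ x : α × (β × γ), PAC (x.1, x.2.2) * PBC x.2 / PC x.2.2 := by
          refine Finset.sum_le_sum fun x _ => ?_
          by_cases hx : PABC x = 0
          · rw [hx, zero_mul]
            exact div_nonneg (mul_nonneg (nAC _) (nBC _)) (nC _)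
          · apply le_of_eq
            simp only [R]
            rw [mul_div_assoc', mul_div_mul_left _ _ hx]
      _ = ∑ c, PC c * PC c / PC c := by
          rw [Fintype.sum_prod_type, Finset.sum_comm, Fintype.sum_prod_type, Finset.sum_comm]
          refine Finset.sum_congr rfl fun c _ => ?_
          simp only
          simp_rw [← Finset.sum_div, ← Finset.sum_mul]
          rw [← Finset.mul_sum, hAC, hBC, sum_pmass_pair, sum_pmass_pair]
      _ = ∑ c, PC c := by
          refine Finset.sum_congr rfl fun c _ => ?_
          exact mul_self_div_self _
      _ = 1 := by rw [hC, sum_pmass_one, h1]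
  have key : ∀ ω, q ω * (1 - R (A ω, (B ω, C ω))) ≤ q ω * (Real.log 2 *
      (Real.logb 2 (PABC (A ω, (B ω, C ω))) + Real.logb 2 (PC (C ω))
        - Real.logb 2 (PAC (A ω, C ω)) - Real.logb 2 (PBC (B ω, C ω)))) := by
    intro ω
    rcases (h0 ω).eq_or_lt with h | h
    · simp [← h]
    have p1 : 0 < PABC (A ω, (B ω, C ω)) := pmass_pos' h0 (fun ω => (A ω, (B ω, C ω))) ω h
    have p2 : 0 < PAC (A ω, C ω) := pmass_pos' h0 (fun ω => (A ω, C ω)) ω h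
    have p3 : 0 < PBC (B ω, C ω) := pmass_pos' h0 (fun ω => (B ω, C ω)) ω h
    have p4 : 0 < PC (C ω) := pmass_pos' h0 C ω h
    refine mul_le_mul_of_nonneg_left ?_ h.le
    have hRpos : 0 < R (A ω, (B ω, C ω)) := div_pos (mul_pos p2 p3) (mul_pos p1 p4)
    have hlog := Real.log_le_sub_one_of_pos hRpos
    have e : Real.log (R (A ω, (B ω, C ω))) = Real.log (PAC (A ω, C ω))
        + Real.log (PBC (B ω, C ω)) - (Real.log (PABC (A ω, (B ω, C ω)))
        + Real.log (PC (C ω))) := by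
      simp only [R]
      rw [Real.log_div (mul_pos p2 p3).ne' (mul_pos p1 p4).ne', Real.log_mul p2.ne' p3.ne',
        Real.log_mul p1.ne' p4.ne']
    have e2 : Real.log 2 *
      (Real.logb 2 (PABC (A ω, (B ω, C ω))) + Real.logb 2 (PC (C ω))
        - Real.logb 2 (PAC (A ω, C ω)) - Real.logb 2 (PBC (B ω, C ω)))
        = - Real.log (R (A ω, (B ω, C ω))) := by
      rw [e]
      simp only [Real.logb]
      field_simp
      ring
    rw [e2]
    linarith
  have hs := Finset.sum_le_sum fun ω (_ : ω ∈ Finset.univ) => key ω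
  have hlhs : 0 ≤ ∑ ω, q ω * (1 - R (A ω, (B ω, C ω))) := by
    simp only [mul_sub, mul_one, Finset.sum_sub_distrib, h1]
    linarith
  have hrhs : ∑ ω, q ω * (Real.log 2 *
      (Real.logb 2 (PABC (A ω, (B ω, C ω))) + Real.logb 2 (PC (C ω))
        - Real.logb 2 (PAC (A ω, C ω)) - Real.logb 2 (PBC (B ω, C ω)))) =
      Real.log 2 * (ent q (fun ω => (A ω, C ω)) + ent q (fun ω => (B ω, C ω))
        - ent q (fun ω => (A ω, (B ω, C ω))) - ent q C) := by
    simp only [ent_eq]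
    rw [← hABC, ← hAC, ← hBC, ← hC]
    simp only [mul_sub, mul_add, Finset.sum_sub_distrib, Finset.sum_add_distrib,
      mul_left_comm (q _) (Real.log 2), ← Finset.mul_sum]
    ring
  rw [hrhs] at hs
  have := nonneg_of_mul_nonneg_right (hlhs.trans hs) hl2
  linarith

lemma ent_indep {Ω 𝒳 : Type*} [Fintype Ω] [Fintype 𝒳] [DecidableEq 𝒳]
    (p : Ω → ℝ) (hp : IsPMF p) {n : ℕ} (X : Fin n → Ω → 𝒳)
    (hindep : ∀ xs : Fin n → 𝒳,
      pmass p (fun ω => (fun i => X i ω)) xs = ∏ i, pmass p (X i) (xs i)) :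
    ent p (fun ω => (fun i => X i ω)) = ∑ i, ent p (X i) := by
  simp only [ent_eq, hindep]
  rw [Finset.sum_neg_distrib, Finset.sum_comm]
  congr 1
  refine Finset.sum_congr rfl fun ω _ => ?_
  rw [← Finset.mul_sum]
  rcases (hp.1 ω).eq_or_lt with h | h
  · simp [← h]
  congr 1
  simp only [Real.logb]
  rw [Real.log_prod (fun i _ => (pmass_pos' hp.1 (X i) ω h).ne'), Finset.sum_div]

/-- Let `X₁,…,Xₙ` be mutually independent, `T` a deterministic function of
`Xⁿ`, and suppose that for each `i`, `Xᵢ` is conditionally independent of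
`Y^{i−1}` given `(X^{i−1}, T)` (expressed as vanishing conditional mutual information).
Then `H(T) ≥ ∑ᵢ I(Xᵢ;(T, Y^{i−1}))`. -/
theorem converse_chain_causal {Ω 𝒳 𝒴 𝒯 : Type*} [Fintype Ω]
    [Fintype 𝒳] [DecidableEq 𝒳] [Fintype 𝒴] [DecidableEq 𝒴] [Fintype 𝒯] [DecidableEq 𝒯]
    (p : Ω → ℝ) (hp : IsPMF p) {n : ℕ}
    (X : Fin n → Ω → 𝒳) (Y : Fin n → Ω → 𝒴) (T : Ω → 𝒯)
    (hindep : ∀ xs : Fin n → 𝒳,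
      pmass p (fun ω => (fun i => X i ω)) xs = ∏ i, pmass p (X i) (xs i))
    (hT : ∃ φ : (Fin n → 𝒳) → 𝒯, ∀ ω, T ω = φ (fun i => X i ω))
    (hci : ∀ i : Fin n,
      condMutInf p (X i) (fun ω => (fun j : {j : Fin n // j.1 < i.1} => Y j.1 ω))
        (fun ω => ((fun j : {j : Fin n // j.1 < i.1} => X j.1 ω), T ω)) = 0) :
    ent p T ≥ ∑ i, mutInf p (X i)
      (fun ω => (T ω, fun j : {j : Fin n // j.1 < i.1} => Y j.1 ω)) := by
  obtain ⟨φ, hφ⟩ := hT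
  let S : ℕ → ℝ := fun k =>
    ent p (fun ω => ((fun j : {j : Fin n // j.1 < k} => X j.1 ω), T ω))
  have hstep : ∀ i : Fin n, mutInf p (X i)
      (fun ω => (T ω, fun j : {j : Fin n // j.1 < i.1} => Y j.1 ω)) ≤
      ent p (X i) - (S (i.1 + 1) - S i.1) := by
    intro i
    have hc := hci i
    have hsub := ent_submod p hp (X i) (fun ω => (fun j : {j : Fin n // j.1 < i.1} => X j.1 ω))
      (fun ω => (T ω, fun j : {j : Fin n // j.1 < i.1} => Y j.1 ω))
    simp only [condMutInf, condEnt] at hc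
    have e1 : ent p (fun ω => (X i ω, ((fun j : {j : Fin n // j.1 < i.1} => X j.1 ω), T ω)))
        = S (i.1 + 1) := by
      apply ent_congr
      intro ω ω'
      simp only [Prod.mk.injEq, funext_iff, Subtype.forall]
      constructor
      · rintro ⟨h1, h2, h3⟩
        refine ⟨fun j hj => ?_, h3⟩
        rcases Nat.lt_succ_iff_lt_or_eq.mp hj with h | h
        · exact h2 j h
        · rw [Fin.ext h]; exact h1
      · rintro ⟨h1, h2⟩
        exact ⟨h1 i (Nat.lt_succ_self _), fun j hj => h1 j (Nat.lt_succ_of_lt hj), h2⟩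
    have e2 : ent p (fun ω => (X i ω, ((fun j : {j : Fin n // j.1 < i.1} => Y j.1 ω),
        ((fun j : {j : Fin n // j.1 < i.1} => X j.1 ω), T ω)))) =
        ent p (fun ω => (X i ω, ((fun j : {j : Fin n // j.1 < i.1} => X j.1 ω),
        (T ω, (fun j : {j : Fin n // j.1 < i.1} => Y j.1 ω))))) := by
      apply ent_congr
      intro ω ω'
      simp only [Prod.mk.injEq]
      tauto
    have e3 : ent p (fun ω => ((fun j : {j : Fin n // j.1 < i.1} => Y j.1 ω),
        ((fun j : {j : Fin n // j.1 < i.1} => X j.1 ω), T ω))) =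
        ent p (fun ω => ((fun j : {j : Fin n // j.1 < i.1} => X j.1 ω),
        (T ω, (fun j : {j : Fin n // j.1 < i.1} => Y j.1 ω)))) := by
      apply ent_congr
      intro ω ω'
      simp only [Prod.mk.injEq]
      tauto
    have e4 : ent p (fun ω => ((fun j : {j : Fin n // j.1 < i.1} => X j.1 ω), T ω)) = S i.1 := rfl
    rw [e1, e2, e3, e4] at hc
    simp only [mutInf]
    linarith
  have hS0 : S 0 = ent p T := by
    apply ent_congr
    intro ω ω'
    simp [funext_iff]
  have hSn : S n = ent p (fun ω => (fun i => X i ω)) := by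
    apply ent_congr
    intro ω ω'
    simp only [Prod.mk.injEq, funext_iff, Subtype.forall]
    constructor
    · rintro ⟨h1, _⟩ i
      exact h1 i i.2
    · intro h
      refine ⟨fun j _ => h j, ?_⟩
      rw [hφ, hφ, funext h]
  have htel : ∑ i : Fin n, (S (i.1 + 1) - S i.1) = S n - S 0 := by
    rw [Fin.sum_univ_eq_sum_range (fun k => S (k + 1) - S k) n, Finset.sum_range_sub]
  have hsum := Finset.sum_le_sum fun i (_ : i ∈ Finset.univ) => hstep i
  rw [Finset.sum_sub_distrib, htel, ← ent_indep p hp X hindep, hSn, hS0] at hsum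
  linarith
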